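/- arXiv:1607.03821 — 9 statements merged into one kernel-verified Lean document; each statement's English description precedes it below -/
import Mathlib

section
/- For every n ≥ 2, every m ≥ n and every δ > 0, there exists a profile of strict monotone valuations on m identical units for which the revenue collected by the PO auction is strictly less than (1/n + δ) times the optimal revenue max over allocations (s_1,…,s_n) with s_1+…+s_n ≤ m of Σ_i v_i(s_i). -/
/-- Among the unserved bidders `active` and quantities `s ≤ units` of remaining units,
there is a pair `(i, s)` with the highest value `v i s`. -/
lemma exists_greedy_pick_mu {n : ℕ} (v : Fin n → ℕ → ℝ) (active : Finset (Fin n))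
    (units : ℕ) (h : active.Nonempty) :
    ∃ q : Fin n × ℕ, q.1 ∈ active ∧ q.2 ≤ units ∧
      ∀ j ∈ active, ∀ t ≤ units, v j t ≤ v q.1 q.2 := by
  classical
  obtain ⟨q, hq, hmax⟩ := Finset.exists_max_image (active ×ˢ Finset.range (units + 1))
    (fun q => v q.1 q.2) (h.product ⟨0, Finset.mem_range.mpr (Nat.succ_pos _)⟩)
  refine ⟨q, (Finset.mem_product.mp hq).1,
    Nat.lt_succ_iff.mp (Finset.mem_range.mp (Finset.mem_product.mp hq).2),
    fun j hj t ht => ?_⟩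
  exact hmax (j, t) (Finset.mem_product.mpr ⟨hj, Finset.mem_range.mpr (Nat.lt_succ_of_le ht)⟩)

/-- The pair (bidder, number of units) picked by one iteration of the PO auction
(ties broken by a fixed rule). -/
noncomputable def greedyPickMU {n : ℕ} (v : Fin n → ℕ → ℝ) (active : Finset (Fin n))
    (units : ℕ) (h : active.Nonempty) : Fin n × ℕ :=
  (exists_greedy_pick_mu v active units h).choose

lemma greedyPickMU_mem {n : ℕ} (v : Fin n → ℕ → ℝ) (active : Finset (Fin n))
    (units : ℕ) (h : active.Nonempty) : (greedyPickMU v active units h).1 ∈ active :=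
  (exists_greedy_pick_mu v active units h).choose_spec.1

/-- The allocation computed by the multi-unit PO auction, recursing on the unserved
bidders `active` and the number of remaining `units`: repeatedly pick a pair `(i, s)`
with the highest value `v i s`, allocate `s` units to `i`, and recurse. -/
noncomputable def poAllocMUAux {n : ℕ} (v : Fin n → ℕ → ℝ) (active : Finset (Fin n))
    (units : ℕ) : Fin n → ℕ :=
  if h : active.Nonempty then
    fun j =>
      if j = (greedyPickMU v active units h).1 then (greedyPickMU v active units h).2
      else poAllocMUAux v (active.erase (greedyPickMU v active units h).1)
        (units - (greedyPickMU v active units h).2) j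
  else fun _ => 0
termination_by active.card
decreasing_by exact Finset.card_erase_lt_of_mem (greedyPickMU_mem v active units h)

/-- The PO auction allocation in the `n × m` multi-unit market; bidder `i` receives
`poAllocMU v m i` units and pays his reported value for them, so the revenue of the PO
auction is `∑ i, v i (poAllocMU v m i)`. -/
noncomputable def poAllocMU {n : ℕ} (v : Fin n → ℕ → ℝ) (m : ℕ) : Fin n → ℕ :=
  poAllocMUAux v Finset.univ m

/-- The optimal revenue of a profile in the `n × m` multi-unit market: the maximum over
allocations `(s₁,…,sₙ)` with `∑ sᵢ ≤ m` of `∑ vᵢ(sᵢ)`. -/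
noncomputable def optRevMU (n m : ℕ) (v : Fin n → ℕ → ℝ) : ℝ :=
  sSup {x : ℝ | ∃ s : Fin n → ℕ, (∑ i, s i) ≤ m ∧ x = ∑ i, v i (s i)}

/-!
The valuations `1 + ε (s n + i)` for `s ≥ 1` are strictly increasing, so the first bidder served
takes all `m` units and the auction collects a single price, which tends to `1` as `ε → 0`. Giving
one unit to each bidder, which is feasible since `n ≤ m`, already earns at least `n`.
-/

section Auction

variable {n : ℕ}

lemma greedyPickMU_snd_le (v : Fin n → ℕ → ℝ) (active : Finset (Fin n)) (units : ℕ)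
    (h : active.Nonempty) : (greedyPickMU v active units h).2 ≤ units :=
  (exists_greedy_pick_mu v active units h).choose_spec.2.1

lemma le_greedyPickMU (v : Fin n → ℕ → ℝ) {active : Finset (Fin n)} {units : ℕ}
    (h : active.Nonempty) {j : Fin n} (hj : j ∈ active) {t : ℕ} (ht : t ≤ units) :
    v j t ≤ v (greedyPickMU v active units h).1 (greedyPickMU v active units h).2 :=
  (exists_greedy_pick_mu v active units h).choose_spec.2.2 j hj t ht

lemma greedyPickMU_snd_eq_of_strictMonoOn {v : Fin n → ℕ → ℝ} {active : Finset (Fin n)}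
    {units : ℕ} (hv : ∀ i ∈ active, StrictMonoOn (v i) (Set.Iic units)) (h : active.Nonempty) :
    (greedyPickMU v active units h).2 = units := by
  have hmem := greedyPickMU_mem v active units h
  have hle := greedyPickMU_snd_le v active units h
  exact hle.antisymm <| ((hv _ hmem).le_iff_le Set.self_mem_Iic hle).1 <|
    le_greedyPickMU v h hmem le_rfl

lemma poAllocMUAux_le (v : Fin n → ℕ → ℝ) (active : Finset (Fin n)) (units : ℕ) (j : Fin n) :
    poAllocMUAux v active units j ≤ units := by
  induction active using Finset.strongInduction generalizing units with
  | H active ih =>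
    rw [poAllocMUAux]
    split_ifs with hactive
    · dsimp only
      split_ifs
      · exact greedyPickMU_snd_le v active units hactive
      · exact (ih _ (Finset.erase_ssubset (greedyPickMU_mem v active units hactive)) _).trans
          (Nat.sub_le _ _)
    · exact Nat.zero_le units

lemma exists_poAllocMU_eq_single [NeZero n] {v : Fin n → ℕ → ℝ} {m : ℕ}
    (hv : ∀ i, StrictMonoOn (v i) (Set.Iic m)) : ∃ i, poAllocMU v m = Pi.single i m := by
  have hne : (Finset.univ : Finset (Fin n)).Nonempty := Finset.univ_nonempty
  have hall := greedyPickMU_snd_eq_of_strictMonoOn (fun i _ => hv i) hne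
  refine ⟨(greedyPickMU v Finset.univ m hne).1, funext fun j => ?_⟩
  rw [poAllocMU, poAllocMUAux, dif_pos hne, Pi.single_apply]
  simp only [hall, Nat.sub_self, Nat.le_zero.1 (poAllocMUAux_le v _ 0 j)]

lemma exists_sum_poAllocMU_eq [NeZero n] {v : Fin n → ℕ → ℝ} {m : ℕ} (hv₀ : ∀ i, v i 0 = 0)
    (hv : ∀ i, StrictMonoOn (v i) (Set.Iic m)) : ∃ i, ∑ j, v j (poAllocMU v m j) = v i m := by
  obtain ⟨i, hi⟩ := exists_poAllocMU_eq_single hv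
  use i
  simp only [hi, Pi.apply_single v hv₀, Finset.sum_pi_single', Finset.mem_univ, if_true]

lemma sum_le_optRevMU {m : ℕ} (v : Fin n → ℕ → ℝ) {s : Fin n → ℕ} (hs : ∑ i, s i ≤ m) :
    ∑ i, v i (s i) ≤ optRevMU n m v := by
  have hfin : {t : Fin n → ℕ | ∑ i, t i ≤ m}.Finite :=
    (Set.finite_Icc 0 fun _ => m).subset fun t ht => ⟨zero_le, fun i =>
      (Finset.single_le_sum_of_canonicallyOrdered (Finset.mem_univ i)).trans ht⟩
  refine le_csSup ((hfin.image fun t => ∑ i, v i (t i)).bddAbove.mono ?_) ⟨s, hs, rfl⟩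
  rintro _ ⟨t, ht, rfl⟩
  exact ⟨t, ht, rfl⟩

end Auction

/-- The bad profile for the PO auction: for small `ε > 0` every bidder values every nonzero
quantity at about `1`. Since `i < n`, the numbers `s * n + i` are distinct for distinct pairs
`(i, s)`, so that perturbing by `ε` times them makes the profile strict. -/
noncomputable def nearUnitValuation (n : ℕ) (ε : ℝ) (i : Fin n) (s : ℕ) : ℝ :=
  if s = 0 then 0 else 1 + ε * ((s * n + i : ℕ) : ℝ)

namespace nearUnitValuation

variable {n : ℕ} {ε : ℝ}

lemma apply_zero (n : ℕ) (ε : ℝ) (i : Fin n) : nearUnitValuation n ε i 0 = 0 :=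
  if_pos rfl

lemma apply_of_ne_zero (ε : ℝ) (i : Fin n) {s : ℕ} (hs : s ≠ 0) :
    nearUnitValuation n ε i s = 1 + ε * ((s * n + i : ℕ) : ℝ) :=
  if_neg hs

lemma one_le (hε : 0 ≤ ε) (i : Fin n) {s : ℕ} (hs : s ≠ 0) : 1 ≤ nearUnitValuation n ε i s := by
  rw [apply_of_ne_zero ε i hs]
  exact le_add_of_nonneg_right (by positivity)

lemma nonneg (hε : 0 ≤ ε) (i : Fin n) (s : ℕ) : 0 ≤ nearUnitValuation n ε i s := by
  rcases eq_or_ne s 0 with rfl | hs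
  · exact (apply_zero n ε i).ge
  · exact zero_le_one.trans (one_le hε i hs)

lemma lt_one_add (hε : 0 < ε) (i : Fin n) (s : ℕ) :
    nearUnitValuation n ε i s < 1 + ε * ((s + 1) * n) := by
  rcases eq_or_ne s 0 with rfl | hs
  · rw [apply_zero]
    positivity
  · have hi : (i : ℝ) < n := by exact_mod_cast i.isLt
    rw [apply_of_ne_zero ε i hs, Nat.cast_add, Nat.cast_mul, add_one_mul]
    gcongr

protected lemma strictMono (hε : 0 < ε) (i : Fin n) : StrictMono (nearUnitValuation n ε i) := by
  intro s t hst
  rcases eq_or_ne s 0 with rfl | hs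
  · rw [apply_zero]
    exact zero_lt_one.trans_le (one_le hε.le i hst.ne')
  · rw [apply_of_ne_zero ε i hs, apply_of_ne_zero ε i (Nat.ne_zero_of_lt hst)]
    have := i.pos
    gcongr

lemma injOn_uncurry (hε : ε ≠ 0) :
    Set.InjOn (Function.uncurry (nearUnitValuation n ε)) {p | p.2 ≠ 0} := by
  rintro ⟨i, s⟩ hs ⟨j, t⟩ ht h
  have : NeZero n := ⟨i.pos.ne'⟩
  simp only [Function.uncurry_apply_pair, apply_of_ne_zero ε _ hs, apply_of_ne_zero ε _ ht] at h
  have hcode : s * n + i = t * n + j := by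
    exact_mod_cast mul_left_cancel₀ hε (add_left_cancel h)
  exact Prod.swap_injective ((Nat.divModEquiv n).symm.injective (a₁ := (s, i)) (a₂ := (t, j)) hcode)

lemma natCast_le_optRevMU (hε : 0 ≤ ε) {m : ℕ} (hm : n ≤ m) :
    (n : ℝ) ≤ optRevMU n m (nearUnitValuation n ε) :=
  calc (n : ℝ) = ∑ _i : Fin n, (1 : ℝ) := by simp
    _ ≤ ∑ i, nearUnitValuation n ε i 1 := Finset.sum_le_sum fun i _ => one_le hε i one_ne_zero
    _ ≤ optRevMU n m (nearUnitValuation n ε) := sum_le_optRevMU _ (by simpa using hm)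

lemma sum_poAllocMU_lt [NeZero n] (hε : 0 < ε) (m : ℕ) :
    ∑ i, nearUnitValuation n ε i (poAllocMU (nearUnitValuation n ε) m i) <
      1 + ε * ((m + 1) * n) := by
  obtain ⟨i, hi⟩ := exists_sum_poAllocMU_eq (m := m) (apply_zero n ε)
    fun i => (nearUnitValuation.strictMono hε i).strictMonoOn _
  exact hi.trans_lt (lt_one_add hε i m)

end nearUnitValuation

/-- for every `n ≥ 2`, `m ≥ n` and `δ > 0` there is a profile of strict
monotone valuations on `m` identical units on which the revenue of the PO auction is
less than `(1/n + δ)` times the optimal revenue. -/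
theorem po_auction_revenue_can_be_one_over_n
    (n m : ℕ) (hn : 2 ≤ n) (hm : n ≤ m) (δ : ℝ) (hδ : 0 < δ) :
    ∃ v : Fin n → ℕ → ℝ,
      (∀ i, v i 0 = 0 ∧ Monotone (v i) ∧ ∀ s, 0 ≤ v i s) ∧
      (∀ (i : Fin n) (s : ℕ) (j : Fin n) (t : ℕ),
        1 ≤ s → s ≤ m → 1 ≤ t → t ≤ m → (i, s) ≠ (j, t) → v i s ≠ v j t) ∧
      (∑ i, v i (poAllocMU v m i)) < (1 / (n : ℝ) + δ) * optRevMU n m v := by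
  have : NeZero n := ⟨by omega⟩
  set ε : ℝ := δ / (m + 1) with hε_def
  have hε : 0 < ε := by positivity
  refine ⟨nearUnitValuation n ε, fun i => ⟨nearUnitValuation.apply_zero n ε i,
    (nearUnitValuation.strictMono hε i).monotone, nearUnitValuation.nonneg hε.le i⟩,
    fun i s j t hs _ ht _ hne => (nearUnitValuation.injOn_uncurry hε.ne').ne
      (Nat.ne_zero_of_lt hs) (Nat.ne_zero_of_lt ht) hne, ?_⟩
  calc ∑ i, nearUnitValuation n ε i (poAllocMU (nearUnitValuation n ε) m i)
      < 1 + ε * ((m + 1) * n) := nearUnitValuation.sum_poAllocMU_lt hε m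
    _ = (1 / (n : ℝ) + δ) * n := by
      rw [hε_def]
      field_simp
    _ ≤ (1 / (n : ℝ) + δ) * optRevMU n m (nearUnitValuation n ε) := by
      gcongr
      exact nearUnitValuation.natCast_le_optRevMU hε.le hm
end

section
/- If the allocation rule W is monotone in every bid, then the pay-as-bid single-parameter mechanism is incentive compatible for value bidders: for every bidder i, every true value w ≥ 0, every profile of opposing bids b_{−i}, and every bid b'_i ≥ 0, the utility bidder i obtains by bidding w is at least the utility he obtains by bidding b'_i. -/
/-- Utility of a value bidder `i` with true value `w` in a single-parameter pay-as-bid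
mechanism with allocation rule `W` under bid profile `b`: winners pay their own bid and
obtain utility `w` if the payment is at most `w` and `⊥ = -∞` otherwise; losers obtain `0`. -/
noncomputable def payAsBidUtility (n : ℕ) (W : (Fin n → ℝ) → Finset (Fin n))
    (b : Fin n → ℝ) (i : Fin n) (w : ℝ) : EReal :=
  if i ∈ W b then (if b i ≤ w then (w : EReal) else ⊥) else 0

section Utility

variable {n : ℕ} {W : (Fin n → ℝ) → Finset (Fin n)} {b c : Fin n → ℝ} {i : Fin n} {w : ℝ}

theorem payAsBidUtility_of_notMem (hlose : i ∉ W b) : payAsBidUtility n W b i w = 0 :=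
  if_neg hlose

theorem payAsBidUtility_of_mem_of_le (hwin : i ∈ W b) (hpay : b i ≤ w) :
    payAsBidUtility n W b i w = w := by
  rw [payAsBidUtility, if_pos hwin, if_pos hpay]

theorem payAsBidUtility_of_mem_of_lt (hwin : i ∈ W b) (hpay : w < b i) :
    payAsBidUtility n W b i w = ⊥ := by
  rw [payAsBidUtility, if_pos hwin, if_neg hpay.not_ge]

theorem payAsBidUtility_nonneg (hw : 0 ≤ w) (hpay : b i ≤ w) :
    0 ≤ payAsBidUtility n W b i w := by
  by_cases hwin : i ∈ W b
  · rw [payAsBidUtility_of_mem_of_le hwin hpay]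
    exact EReal.coe_nonneg.mpr hw
  · exact (payAsBidUtility_of_notMem hwin).ge

-- All affordable wins are worth the same `w`, so a lower price is no advantage in itself.
theorem payAsBidUtility_le_of_mem_imp_mem (hw : 0 ≤ w) (hc : c i ≤ w)
    (hwins : b i ≤ w → i ∈ W b → i ∈ W c) :
    payAsBidUtility n W b i w ≤ payAsBidUtility n W c i w := by
  by_cases hwin : i ∈ W b
  · rcases le_or_gt (b i) w with hpay | hpay
    · rw [payAsBidUtility_of_mem_of_le hwin hpay,
        payAsBidUtility_of_mem_of_le (hwins hpay hwin) hc]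
    · rw [payAsBidUtility_of_mem_of_lt hwin hpay]
      exact bot_le
  · rw [payAsBidUtility_of_notMem hwin]
    exact payAsBidUtility_nonneg hw hc

end Utility

/-- if the allocation rule `W` is monotone in every bid, then the
pay-as-bid single-parameter mechanism is incentive compatible for value bidders. -/
theorem monotone_payAsBid_incentive_compatible
    (n : ℕ) (W : (Fin n → ℝ) → Finset (Fin n))
    (hmono : ∀ (b : Fin n → ℝ), (∀ j, 0 ≤ b j) → ∀ (i : Fin n) (b' : ℝ),
      i ∈ W b → b i ≤ b' → i ∈ W (Function.update b i b'))
    (i : Fin n) (w : ℝ) (hw : 0 ≤ w)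
    (b : Fin n → ℝ) (hb : ∀ j, 0 ≤ b j) (b' : ℝ) (hb' : 0 ≤ b') :
    payAsBidUtility n W (Function.update b i b') i w ≤
      payAsBidUtility n W (Function.update b i w) i w := by
  have hdev : ∀ j, 0 ≤ Function.update b i b' j :=
    (Function.forall_update_iff b fun _ x ↦ 0 ≤ x).mpr ⟨hb', fun j _ ↦ hb j⟩
  refine payAsBidUtility_le_of_mem_imp_mem hw (Function.update_self i w b).le fun hpay hwin ↦ ?_
  have htruth := hmono (Function.update b i b') hdev i w hwin hpay
  rwa [Function.update_idem] at htruth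
end

section
/- Suppose a single-parameter mechanism (W, p) is such that losers pay 0 and every winner pays at most his own bid (p_i(b) ≤ b_i whenever i ∈ W(b)), and suppose the mechanism is incentive compatible for value bidders. Then the allocation rule W is monotone in every bid: whenever i ∈ W(b) and b'_i ≥ b_i, then i ∈ W(b'_i, b_{−i}). -/
/-- Utility of a value bidder `i` with true value `w` in a single-parameter mechanism
with allocation rule `W` and payment rule `p` under bid profile `b`: a winner obtains
utility `w` if his payment is at most `w` and `⊥ = -∞` otherwise; losers obtain `0`. -/
noncomputable def spMechUtility (n : ℕ) (W : (Fin n → ℝ) → Finset (Fin n))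
    (p : (Fin n → ℝ) → Fin n → ℝ) (b : Fin n → ℝ) (i : Fin n) (w : ℝ) : EReal :=
  if i ∈ W b then (if p b i ≤ w then (w : EReal) else ⊥) else 0

variable {n : ℕ} {W : (Fin n → ℝ) → Finset (Fin n)} {p : (Fin n → ℝ) → Fin n → ℝ}
  {b : Fin n → ℝ} {i : Fin n} {w b' : ℝ}

theorem spMechUtility_of_mem_of_le (hi : i ∈ W b) (hw : p b i ≤ w) :
    spMechUtility n W p b i w = w := by
  rw [spMechUtility, if_pos hi, if_pos hw]

theorem spMechUtility_of_mem_of_lt (hi : i ∈ W b) (hw : w < p b i) :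
    spMechUtility n W p b i w = ⊥ := by
  rw [spMechUtility, if_pos hi, if_neg hw.not_ge]

theorem spMechUtility_of_notMem (hi : i ∉ W b) : spMechUtility n W p b i w = 0 :=
  if_neg hi

/-- Incentive compatibility for value bidders: bidding the true value `w` is optimal against all
opposing bids. The entry `b i` of the profile is always overwritten, so `b` stands for the
opposing bids only. -/
def IncentiveCompatible (n : ℕ) (W : (Fin n → ℝ) → Finset (Fin n))
    (p : (Fin n → ℝ) → Fin n → ℝ) : Prop :=
  ∀ b : Fin n → ℝ, (∀ j, 0 ≤ b j) → ∀ (i : Fin n) (w : ℝ), 0 ≤ w → ∀ b' : ℝ, 0 ≤ b' →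
    spMechUtility n W p (Function.update b i b') i w ≤
      spMechUtility n W p (Function.update b i w) i w

namespace IncentiveCompatible

-- Otherwise a bidder of value `w` gains by bidding `b i`, which wins at an acceptable price.
theorem lt_payment_of_notMem_update (hic : IncentiveCompatible n W p) (hb : ∀ j, 0 ≤ b j)
    (hi : i ∈ W b) (hw : 0 < w) (hlose : i ∉ W (Function.update b i w)) : w < p b i := by
  by_contra! hpay
  have hdev := hic b hb i w hw.le (b i) (hb i)
  rw [Function.update_eq_self, spMechUtility_of_mem_of_le hi hpay,
    spMechUtility_of_notMem hlose] at hdev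
  exact hw.not_ge (EReal.coe_nonpos.mp hdev)

-- Otherwise a bidder of value `b i` avoids the utility `⊥` by bidding `b'` and losing.
theorem payment_le_of_notMem_update (hic : IncentiveCompatible n W p) (hb : ∀ j, 0 ≤ b j)
    (hi : i ∈ W b) (hb' : 0 ≤ b') (hlose : i ∉ W (Function.update b i b')) : p b i ≤ b i := by
  by_contra! hpay
  have hdev := hic b hb i (b i) (hb i) b' hb'
  rw [Function.update_eq_self, spMechUtility_of_mem_of_lt hi hpay,
    spMechUtility_of_notMem hlose] at hdev
  exact EReal.bot_lt_zero.not_ge hdev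

end IncentiveCompatible

theorem incentive_compatible_implies_monotone_general (hic : IncentiveCompatible n W p)
    (hb : ∀ j, 0 ≤ b j) (hi : i ∈ W b) (hb' : b i ≤ b') : i ∈ W (Function.update b i b') := by
  obtain rfl | hlt := hb'.eq_or_lt
  · rwa [Function.update_eq_self]
  · by_contra hlose
    have hpos : 0 < b' := (hb i).trans_lt hlt
    have hcontra : b' < b i :=
      calc b' < p b i := hic.lt_payment_of_notMem_update hb hi hpos hlose
        _ ≤ b i := hic.payment_le_of_notMem_update hb hi hpos.le hlose
    exact hcontra.not_gt hlt

/-- if in a single-parameter mechanism losers pay `0`, every winner pays at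
most his own bid, and the mechanism is incentive compatible for value bidders, then the
allocation rule is monotone in every bid. -/
theorem incentive_compatible_implies_monotone
    (n : ℕ) (W : (Fin n → ℝ) → Finset (Fin n)) (p : (Fin n → ℝ) → Fin n → ℝ)
    (hlose : ∀ (b : Fin n → ℝ), (∀ j, 0 ≤ b j) → ∀ i : Fin n, i ∉ W b → p b i = 0)
    (hwin : ∀ (b : Fin n → ℝ), (∀ j, 0 ≤ b j) → ∀ i : Fin n, i ∈ W b → p b i ≤ b i)
    (hic : ∀ (b : Fin n → ℝ), (∀ j, 0 ≤ b j) → ∀ (i : Fin n) (w : ℝ), 0 ≤ w →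
      ∀ (b' : ℝ), 0 ≤ b' →
      spMechUtility n W p (Function.update b i b') i w ≤
        spMechUtility n W p (Function.update b i w) i w)
    (b : Fin n → ℝ) (hb : ∀ j, 0 ≤ b j) (i : Fin n) (hi : i ∈ W b)
    (b' : ℝ) (hb' : b i ≤ b') :
    i ∈ W (Function.update b i b') :=
  incentive_compatible_implies_monotone_general hic hb hi hb'
end

section
/- For every n ≥ 2 and k ≥ 2, there is no deterministic mechanism (f, p) for the assignment market with n value bidders and k heterogeneous items that is simultaneously individually rational, truthful for value bidders, and revenue maximizing (its revenue Σ_i p_i(v) equals the optimal revenue on every profile of valuations). -/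
/-- An allocation in the assignment market: each bidder receives at most one item and no
item is assigned twice. -/
def AssignFeasible (n k : ℕ) (a : Fin n → Option (Fin k)) : Prop :=
  ∀ (i j : Fin n) (x : Fin k), a i = some x → a j = some x → i = j

/-- The optimal revenue of a profile in the assignment market: the maximum over
allocations of the sum of the bidders' values for their assigned items. -/
noncomputable def optRevAssign (n k : ℕ) (v : Fin n → Fin k → ℝ) : ℝ :=
  sSup {x : ℝ | ∃ a : Fin n → Option (Fin k),
    AssignFeasible n k a ∧ x = ∑ i, (a i).elim 0 (v i)}

/-!
Individual rationality and revenue maximality make the chosen allocation efficient. Let only two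
bidders have nonzero values: `i` values item `x` at `3` and item `y` at `2`, and `j` values only
`x`, at `2`. Efficiency then gives `x` to `j`, and `i` gets at most `2`. If `i` conceals his value
for `y`, then he wins `x`, and individual rationality with respect to the report bounds his payment
by his true value `3`, so the misreport is affordable and profitable.
-/

/-- The total value that the bidders with valuations `v` derive from the allocation `a`. -/
def welfare {ι κ : Type*} [Fintype ι] (v : ι → κ → ℝ) (a : ι → Option κ) : ℝ :=
  ∑ i, (a i).elim 0 (v i)

/-- An allocation is efficient if it is feasible and maximizes welfare among feasible
allocations. -/
def IsEfficient {n k : ℕ} (v : Fin n → Fin k → ℝ) (a : Fin n → Option (Fin k)) : Prop :=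
  AssignFeasible n k a ∧ ∀ b, AssignFeasible n k b → welfare v b ≤ welfare v a

/-- The profile in which bidder `i` has valuation `u`, bidder `j` has valuation `w`, and all
other bidders value every item at zero. If `i = j`, then `u` takes precedence. -/
def twoBidderProfile {ι κ : Type*} [DecidableEq ι] (i j : ι) (u w : κ → ℝ) : ι → κ → ℝ :=
  Function.update (Pi.single j w) i u

theorem welfare_le_optRevAssign {n k : ℕ} (v : Fin n → Fin k → ℝ) {a : Fin n → Option (Fin k)}
    (ha : AssignFeasible n k a) : welfare v a ≤ optRevAssign n k v := by
  refine le_csSup (Set.Finite.bddAbove ?_) ⟨a, ha, rfl⟩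
  refine (Set.finite_range (welfare v)).subset ?_
  rintro _ ⟨b, -, rfl⟩
  exact ⟨b, rfl⟩

theorem isEfficient_of_optRevAssign_le_sum {n k : ℕ} {v : Fin n → Fin k → ℝ}
    {a : Fin n → Option (Fin k)} {p : Fin n → ℝ} (ha : AssignFeasible n k a)
    (hir : ∀ i, p i ≤ (a i).elim 0 (v i)) (hrev : optRevAssign n k v ≤ ∑ i, p i) :
    IsEfficient v a :=
  ⟨ha, fun b hb ↦
    calc
      welfare v b ≤ optRevAssign n k v := welfare_le_optRevAssign v hb
      _ ≤ ∑ i, p i := hrev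
      _ ≤ welfare v a := Finset.sum_le_sum fun i _ ↦ hir i⟩

theorem assignFeasible_update_update {n k : ℕ} (i j : Fin n) {o o' : Option (Fin k)}
    (h : ∀ x, o = some x → o' ≠ some x) :
    AssignFeasible n k (Function.update (Function.update (fun _ ↦ none) j o') i o) := by
  intro l m x hl hm
  simp only [Function.update_apply] at hl hm
  grind

section TwoBidders

variable {ι κ : Type*} [DecidableEq ι]

theorem twoBidderProfile_nonneg (i j : ι) {u w : κ → ℝ} (hu : 0 ≤ u) (hw : 0 ≤ w) :
    0 ≤ twoBidderProfile i j u w :=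
  le_update_iff.2 ⟨hu, fun l _ ↦ Pi.single_nonneg.2 hw l⟩

@[simp]
theorem twoBidderProfile_apply_left (i j : ι) (u w : κ → ℝ) : twoBidderProfile i j u w i = u :=
  Function.update_self ..

@[simp]
theorem update_twoBidderProfile_left (i j : ι) (u u' w : κ → ℝ) :
    Function.update (twoBidderProfile i j u w) i u' = twoBidderProfile i j u' w :=
  Function.update_idem ..

theorem welfare_twoBidderProfile [Fintype ι] {i j : ι} (hij : i ≠ j) (u w : κ → ℝ)
    (a : ι → Option κ) :
    welfare (twoBidderProfile i j u w) a = (a i).elim 0 u + (a j).elim 0 w := by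
  rw [welfare, Fintype.sum_eq_add i j hij]
  · simp [twoBidderProfile, hij.symm]
  · rintro l ⟨hi, hj⟩
    cases a l <;> simp [twoBidderProfile, hi, hj]

end TwoBidders

section SingleItem

variable {κ M : Type*} [DecidableEq κ]

theorem elim_single_of_ne [Zero M] {o : Option κ} {x : κ} (h : o ≠ some x) (c : M) :
    o.elim 0 (Pi.single x c) = 0 := by
  cases o with
  | none => rfl
  | some z => simp [show z ≠ x by grind]

theorem elim_single_le [Zero M] [Preorder M] (o : Option κ) (x : κ) {c : M} (hc : 0 ≤ c) :
    o.elim 0 (Pi.single x c) ≤ c := by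
  by_cases h : o = some x
  · simp [h]
  · exact (elim_single_of_ne h c).trans_le hc

theorem elim_single_add_single_le_of_ne [AddZeroClass M] [Preorder M] {o : Option κ} {x : κ}
    (h : o ≠ some x) (y : κ) (s : M) {c : M} (hc : 0 ≤ c) :
    o.elim 0 (Pi.single x s + Pi.single y c) ≤ c :=
  calc
    o.elim 0 (Pi.single x s + Pi.single y c)
        = o.elim 0 (Pi.single x s) + o.elim 0 (Pi.single y c) := by cases o <;> simp
    _ = o.elim 0 (Pi.single y c) := by rw [elim_single_of_ne h, zero_add]
    _ ≤ c := elim_single_le o y hc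

end SingleItem

namespace IsEfficient

variable {n k : ℕ} {i j : Fin n} {a : Fin n → Option (Fin k)}

theorem add_le_of_disjoint {u w : Fin k → ℝ} (ha : IsEfficient (twoBidderProfile i j u w) a)
    (hij : i ≠ j) {o o' : Option (Fin k)} (h : ∀ x, o = some x → o' ≠ some x) :
    o.elim 0 u + o'.elim 0 w ≤ (a i).elim 0 u + (a j).elim 0 w := by
  have hle := ha.2 _ (assignFeasible_update_update i j h)
  simpa [welfare_twoBidderProfile hij, hij.symm] using hle

theorem add_le_of_apply_eq_some {u : Fin k → ℝ} {x y : Fin k} {c : ℝ}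
    (ha : IsEfficient (twoBidderProfile i j u (Pi.single x c)) a) (hij : i ≠ j) (hyx : y ≠ x)
    (hi : a i = some x) : u y + c ≤ u x := by
  have hj : a j ≠ some x := fun hj ↦ hij (ha.1 i j x hi hj)
  have hle := ha.add_le_of_disjoint hij (o := some y) (o' := some x) (by grind)
  simpa [hi, elim_single_of_ne hj] using hle

theorem apply_eq_some_of_lt {x : Fin k} {s c : ℝ}
    (ha : IsEfficient (twoBidderProfile i j (Pi.single x s) (Pi.single x c)) a) (hij : i ≠ j)
    (hc : 0 ≤ c) (hcs : c < s) : a i = some x := by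
  by_contra hi
  have hle := ha.add_le_of_disjoint hij (o := some x) (o' := none) (by simp)
  have hsc : s ≤ c := by
    simpa [elim_single_of_ne hi] using hle.trans (add_le_add_right (elim_single_le (a j) x hc) _)
  exact hsc.not_gt hcs

end IsEfficient

/-- for `n ≥ 2` bidders and `k ≥ 2` heterogeneous items, there is no
deterministic mechanism for the assignment market that is individually rational,
truthful for value bidders, and revenue maximizing. -/
theorem no_truthful_revenue_maximizing_assignment (n k : ℕ) (hn : 2 ≤ n) (hk : 2 ≤ k) :
    ¬ ∃ (f : (Fin n → Fin k → ℝ) → Fin n → Option (Fin k))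
        (p : (Fin n → Fin k → ℝ) → Fin n → ℝ),
      (∀ v, (∀ i x, 0 ≤ v i x) → AssignFeasible n k (f v)) ∧
      (∀ v, (∀ i x, 0 ≤ v i x) → ∀ i, p v i ≤ (f v i).elim 0 (v i)) ∧
      (∀ v, (∀ i x, 0 ≤ v i x) → ∀ (i : Fin n) (v' : Fin k → ℝ), (∀ x, 0 ≤ v' x) →
        (p (Function.update v i v') i ≤ (f (Function.update v i v') i).elim 0 (v i) →
          (f (Function.update v i v') i).elim 0 (v i) ≤ (f v i).elim 0 (v i))) ∧
      (∀ v, (∀ i x, 0 ≤ v i x) → (∑ i, p v i) = optRevAssign n k v) := by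
  rintro ⟨f, p, hfeas, hir, htruth, hrev⟩
  have heff v (hv : 0 ≤ v) : IsEfficient v (f v) :=
    isEfficient_of_optRevAssign_le_sum (hfeas v hv) (hir v hv) (hrev v hv).ge
  obtain ⟨i, j, hij⟩ := (Fin.nontrivial_iff_two_le.2 hn).exists_pair_ne
  obtain ⟨x, y, hxy⟩ := (Fin.nontrivial_iff_two_le.2 hk).exists_pair_ne
  let u : Fin k → ℝ := Pi.single x 3 + Pi.single y 2
  let u' : Fin k → ℝ := Pi.single x 3
  let w : Fin k → ℝ := Pi.single x 2
  have hw : 0 ≤ w := Pi.single_nonneg.2 zero_le_two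
  have hu' : 0 ≤ u' := Pi.single_nonneg.2 zero_le_three
  have hu : 0 ≤ u := add_nonneg hu' (Pi.single_nonneg.2 zero_le_two)
  have hv := twoBidderProfile_nonneg i j hu hw
  have hv' := twoBidderProfile_nonneg i j hu' hw
  have hux : u x = 3 := by simp [u, hxy]
  have huy : u y = 2 := by simp [u, hxy.symm]
  have hloses : f (twoBidderProfile i j u w) i ≠ some x := fun h ↦ by
    linarith [(heff _ hv).add_le_of_apply_eq_some hij hxy.symm h]
  have hwins : f (twoBidderProfile i j u' w) i = some x :=
    (heff _ hv').apply_eq_some_of_lt hij zero_le_two (by norm_num)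
  have hpay : p (twoBidderProfile i j u' w) i ≤ 3 := by simpa [hwins, u'] using hir _ hv' i
  have htrue : (f (twoBidderProfile i j u w) i).elim 0 u ≤ 2 :=
    elim_single_add_single_le_of_ne hloses y 3 zero_le_two
  have hprofit : 3 ≤ (f (twoBidderProfile i j u w) i).elim 0 u := by
    simpa [hwins, hux, hpay] using htruth _ hv i u' hu'
  linarith
end

section
/- Restricted to the domain of profiles with v_1(2) > v_2(2) (bidder 1 is the public strongest bidder), the golden ratio mechanism is strategy-proof for value bidders (against all misreports that remain in the domain) and its revenue is at least r = (√5 − 1)/2 times the optimal revenue: (i) for each bidder i and each misreport keeping the profile in the domain, either the misreport yields a bundle whose reported value exceeds its true value (utility −∞), or the true value of the bundle received under the misreport is at most the true value of the bundle received under truthful reporting; and (ii) the sum of the winners' bids for their assigned units is at least r · max(v_1(2), v_1(1) + v_2(1), v_2(2)). -/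
/-- A multi-unit valuation: `v 0 = 0`, monotone nondecreasing, nonnegative. -/
def MUValuation (v : ℕ → ℝ) : Prop := v 0 = 0 ∧ Monotone v ∧ ∀ s, 0 ≤ v s

/-- The allocation of the golden ratio mechanism on the domain `v₁(2) > v₂(2)`:
if `v₂(1) > r·v₁(2)` (with `r = (√5 - 1)/2`) then each bidder gets one unit,
otherwise bidder 1 gets both units.  Each winner pays his own bid (pay-as-bid). -/
noncomputable def goldenAlloc (v₁ v₂ : ℕ → ℝ) : ℕ × ℕ :=
  if v₂ 1 > ((Real.sqrt 5 - 1) / 2) * v₁ 2 then (1, 1) else (2, 0)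

/-!
Let bidder 1 receive both units unless bidder 2's bid for one unit exceeds `r` times bidder 1's bid
for two. A misreport gains bidder 1 the second unit only if he raises his bid for two units, and
gains bidder 2 a unit only if he raises his bid for one, so each wins more only by overbidding for
the bundle he receives.

If the units are split, the revenue is at least `r * v₁ 2`. If they are bundled, the split would
have earned at most `v₁ 2 + r * v₁ 2`, so the revenue is at least `(1 + r)⁻¹` of the optimum. The
guarantee `min r (1 + r)⁻¹` is largest where the two bounds agree, that is at `r = φ⁻¹`.
-/

/-- The golden ratio mechanism's allocation with an arbitrary ratio `r` in place of `(√5 - 1) / 2`: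
the first component counts the units of bidder 1, the second those of bidder 2. -/
noncomputable def thresholdAlloc (r : ℝ) (v₁ v₂ : ℕ → ℝ) : ℕ × ℕ :=
  if r * v₁ 2 < v₂ 1 then (1, 1) else (2, 0)

/-- The largest pay-as-bid revenue over the allocations of both units, for valuations that
vanish at `0`. -/
noncomputable def optimalRevenue (v₁ v₂ : ℕ → ℝ) : ℝ :=
  max (v₁ 2) (max (v₁ 1 + v₂ 1) (v₂ 2))

section Threshold

variable {r : ℝ} {v₁ v₂ : ℕ → ℝ}

theorem thresholdAlloc_of_lt (h : r * v₁ 2 < v₂ 1) : thresholdAlloc r v₁ v₂ = (1, 1) :=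
  if_pos h

theorem thresholdAlloc_of_le (h : v₂ 1 ≤ r * v₁ 2) : thresholdAlloc r v₁ v₂ = (2, 0) :=
  if_neg h.not_gt

theorem thresholdAlloc_overbid_or_le_fst (hr : 0 ≤ r) (hv₁ : v₁ 1 ≤ v₁ 2) (v₁' : ℕ → ℝ) :
    v₁ (thresholdAlloc r v₁' v₂).1 < v₁' (thresholdAlloc r v₁' v₂).1 ∨
      v₁ (thresholdAlloc r v₁' v₂).1 ≤ v₁ (thresholdAlloc r v₁ v₂).1 := by
  rcases lt_or_ge (r * v₁ 2) (v₂ 1) with split | bundle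
  · rcases lt_or_ge (r * v₁' 2) (v₂ 1) with split' | bundle'
    · rw [thresholdAlloc_of_lt split, thresholdAlloc_of_lt split']
      exact Or.inr le_rfl
    · rw [thresholdAlloc_of_le bundle']
      exact Or.inl (lt_of_mul_lt_mul_left (split.trans_le bundle') hr)
  · rw [thresholdAlloc_of_le bundle]
    rcases lt_or_ge (r * v₁' 2) (v₂ 1) with split' | bundle'
    · rw [thresholdAlloc_of_lt split']
      exact Or.inr hv₁
    · rw [thresholdAlloc_of_le bundle']
      exact Or.inr le_rfl

theorem thresholdAlloc_overbid_or_le_snd (hv₂ : v₂ 0 ≤ v₂ 1) (v₂' : ℕ → ℝ) :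
    v₂ (thresholdAlloc r v₁ v₂').2 < v₂' (thresholdAlloc r v₁ v₂').2 ∨
      v₂ (thresholdAlloc r v₁ v₂').2 ≤ v₂ (thresholdAlloc r v₁ v₂).2 := by
  rcases lt_or_ge (r * v₁ 2) (v₂ 1) with split | bundle
  · rw [thresholdAlloc_of_lt split]
    rcases lt_or_ge (r * v₁ 2) (v₂' 1) with split' | bundle'
    · rw [thresholdAlloc_of_lt split']
      exact Or.inr le_rfl
    · rw [thresholdAlloc_of_le bundle']
      exact Or.inr hv₂
  · rcases lt_or_ge (r * v₁ 2) (v₂' 1) with split' | bundle'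
    · rw [thresholdAlloc_of_lt split']
      exact Or.inl (bundle.trans_lt split')
    · rw [thresholdAlloc_of_le bundle, thresholdAlloc_of_le bundle']
      exact Or.inr le_rfl

theorem optimalRevenue_of_le (hdom : v₂ 2 ≤ v₁ 2) :
    optimalRevenue v₁ v₂ = max (v₁ 2) (v₁ 1 + v₂ 1) := by
  rw [optimalRevenue, ← max_assoc, max_eq_left (le_max_of_le_left hdom)]

theorem min_one_mul_optimalRevenue_le_split (hr : 0 ≤ r) (hv₁_one : 0 ≤ v₁ 1)
    (hv₁_two : 0 ≤ v₁ 2) (hdom : v₂ 2 ≤ v₁ 2) (split : r * v₁ 2 ≤ v₂ 1) :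
    min r 1 * optimalRevenue v₁ v₂ ≤ v₁ 1 + v₂ 1 := by
  have hv₂_one : 0 ≤ v₂ 1 := (mul_nonneg hr hv₁_two).trans split
  rw [optimalRevenue_of_le hdom, mul_max_of_nonneg _ _ (le_min hr zero_le_one)]
  refine max_le ?_ (mul_le_of_le_one_left (add_nonneg hv₁_one hv₂_one) (min_le_right r 1))
  calc min r 1 * v₁ 2 ≤ r * v₁ 2 := mul_le_mul_of_nonneg_right (min_le_left r 1) hv₁_two
    _ ≤ v₂ 1 := split
    _ ≤ v₁ 1 + v₂ 1 := le_add_of_nonneg_left hv₁_one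

theorem optimalRevenue_le_one_add_mul_bundle (hr : 0 ≤ r) (hv₁_mono : v₁ 1 ≤ v₁ 2)
    (hv₁_two : 0 ≤ v₁ 2) (hdom : v₂ 2 ≤ v₁ 2) (bundle : v₂ 1 ≤ r * v₁ 2) :
    optimalRevenue v₁ v₂ ≤ (1 + r) * v₁ 2 := by
  rw [optimalRevenue_of_le hdom, one_add_mul]
  exact max_le (le_add_of_nonneg_right (mul_nonneg hr hv₁_two)) (add_le_add hv₁_mono bundle)

theorem optimalRevenue_nonneg (hv₁ : 0 ≤ v₁ 2) : 0 ≤ optimalRevenue v₁ v₂ :=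
  le_max_of_le_left hv₁

theorem min_mul_optimalRevenue_le_thresholdAlloc (hr : 0 ≤ r) (hv₁ : MUValuation v₁)
    (hv₂_zero : v₂ 0 = 0) (hdom : v₂ 2 ≤ v₁ 2) :
    min r (1 + r)⁻¹ * optimalRevenue v₁ v₂ ≤
      v₁ (thresholdAlloc r v₁ v₂).1 + v₂ (thresholdAlloc r v₁ v₂).2 := by
  obtain ⟨-, hv₁_mono, hv₁_nonneg⟩ := hv₁
  have hopt : 0 ≤ optimalRevenue v₁ v₂ := optimalRevenue_nonneg (hv₁_nonneg 2)
  rcases lt_or_ge (r * v₁ 2) (v₂ 1) with split | bundle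
  · rw [thresholdAlloc_of_lt split]
    have hratio : (1 + r)⁻¹ ≤ 1 := inv_le_one_of_one_le₀ (le_add_of_nonneg_right hr)
    calc min r (1 + r)⁻¹ * optimalRevenue v₁ v₂ ≤ min r 1 * optimalRevenue v₁ v₂ := by gcongr
      _ ≤ v₁ 1 + v₂ 1 :=
        min_one_mul_optimalRevenue_le_split hr (hv₁_nonneg 1) (hv₁_nonneg 2) hdom split.le
  · rw [thresholdAlloc_of_le bundle, hv₂_zero, add_zero]
    calc min r (1 + r)⁻¹ * optimalRevenue v₁ v₂ ≤ (1 + r)⁻¹ * optimalRevenue v₁ v₂ := by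
          gcongr
          exact min_le_right r (1 + r)⁻¹
      _ ≤ v₁ 2 := inv_mul_le_of_le_mul₀ (by positivity) (hv₁_nonneg 2)
        (optimalRevenue_le_one_add_mul_bundle hr (hv₁_mono one_le_two) (hv₁_nonneg 2) hdom bundle)

theorem golden_ratio_mechanism_truthful_and_golden_revenue_general (hr : 0 ≤ r)
    (hv₁ : MUValuation v₁) (hv₂ : MUValuation v₂) :
    (∀ v₁' : ℕ → ℝ,
      v₁ (thresholdAlloc r v₁' v₂).1 < v₁' (thresholdAlloc r v₁' v₂).1 ∨
        v₁ (thresholdAlloc r v₁' v₂).1 ≤ v₁ (thresholdAlloc r v₁ v₂).1) ∧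
    (∀ v₂' : ℕ → ℝ,
      v₂ (thresholdAlloc r v₁ v₂').2 < v₂' (thresholdAlloc r v₁ v₂').2 ∨
        v₂ (thresholdAlloc r v₁ v₂').2 ≤ v₂ (thresholdAlloc r v₁ v₂).2) ∧
    (v₂ 2 ≤ v₁ 2 →
      v₁ (thresholdAlloc r v₁ v₂).1 + v₂ (thresholdAlloc r v₁ v₂).2 ≥
        min r (1 + r)⁻¹ * optimalRevenue v₁ v₂) :=
  ⟨thresholdAlloc_overbid_or_le_fst hr (hv₁.2.1 one_le_two),
    thresholdAlloc_overbid_or_le_snd (hv₂.2.1 zero_le_one),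
    min_mul_optimalRevenue_le_thresholdAlloc hr hv₁ hv₂.1⟩

end Threshold

theorem sqrt_five_sub_one_div_two_eq_inv_goldenRatio :
    (Real.sqrt 5 - 1) / 2 = Real.goldenRatio⁻¹ := by
  rw [Real.inv_goldenRatio, Real.goldenConj]
  ring

theorem goldenAlloc_eq_thresholdAlloc :
    goldenAlloc = thresholdAlloc Real.goldenRatio⁻¹ := by
  rw [← sqrt_five_sub_one_div_two_eq_inv_goldenRatio]
  rfl

theorem inv_one_add_inv_goldenRatio : (1 + Real.goldenRatio⁻¹)⁻¹ = Real.goldenRatio⁻¹ := by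
  rw [Real.inv_goldenRatio, ← sub_eq_add_neg, Real.one_sub_goldenRatio, Real.inv_goldenRatio]

/-- on the domain of profiles with `v₁(2) > v₂(2)`, the golden ratio
mechanism is strategy-proof for value bidders against misreports staying in the domain,
and its pay-as-bid revenue is at least `r = (√5-1)/2` times the optimal revenue
`max (v₁ 2) (max (v₁ 1 + v₂ 1) (v₂ 2))`. -/
theorem golden_ratio_mechanism_truthful_and_golden_revenue
    (v₁ v₂ : ℕ → ℝ) (h₁ : MUValuation v₁) (h₂ : MUValuation v₂) (hdom : v₂ 2 < v₁ 2) :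
    (∀ v₁' : ℕ → ℝ, MUValuation v₁' → v₂ 2 < v₁' 2 →
      v₁ (goldenAlloc v₁' v₂).1 < v₁' (goldenAlloc v₁' v₂).1 ∨
        v₁ (goldenAlloc v₁' v₂).1 ≤ v₁ (goldenAlloc v₁ v₂).1) ∧
    (∀ v₂' : ℕ → ℝ, MUValuation v₂' → v₂' 2 < v₁ 2 →
      v₂ (goldenAlloc v₁ v₂').2 < v₂' (goldenAlloc v₁ v₂').2 ∨
        v₂ (goldenAlloc v₁ v₂').2 ≤ v₂ (goldenAlloc v₁ v₂).2) ∧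
    v₁ (goldenAlloc v₁ v₂).1 + v₂ (goldenAlloc v₁ v₂).2 ≥
      ((Real.sqrt 5 - 1) / 2) * max (v₁ 2) (max (v₁ 1 + v₂ 1) (v₂ 2)) := by
  rw [goldenAlloc_eq_thresholdAlloc, sqrt_five_sub_one_div_two_eq_inv_goldenRatio]
  obtain ⟨truthful₁, truthful₂, revenue⟩ :=
    golden_ratio_mechanism_truthful_and_golden_revenue_general
      (inv_nonneg.mpr Real.goldenRatio_pos.le) h₁ h₂
  rw [inv_one_add_inv_goldenRatio, min_self] at revenue
  exact ⟨fun v₁' _ _ => truthful₁ v₁', fun v₂' _ _ => truthful₂ v₂', revenue hdom.le⟩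
end

section
/- Let r = (√5 − 1)/2 and let θ, α, β be real numbers with 0 ≤ β ≤ θ and α ≥ 0. Then (if α > r·θ then α + β else θ) ≥ r · max(θ, α + β). -/
/-!
Replace the threshold `r * θ` by `t * θ`. If `α` exceeds the threshold, the revenue `α + β` is more
than `t * θ`; otherwise `α + β ≤ (t + 1) * θ`, so the revenue `θ` is at least `(α + β) / (t + 1)`.
The guaranteed fraction `min t (1 / (t + 1))` of `max θ (α + β)` is largest when the two terms
agree, that is when `t * (t + 1) = 1`, which makes `t` the reciprocal of the golden ratio.
-/

section ThresholdRule

variable {R : Type*} [Semiring R] [LinearOrder R] [IsOrderedRing R]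

theorem mul_max_le_of_mul_le {r x y : R} (hr0 : 0 ≤ r) (hr1 : r ≤ 1) (hx : 0 ≤ x)
    (hxy : r * y ≤ x) : r * max x y ≤ x := by
  rw [mul_max_of_nonneg _ _ hr0]
  exact max_le (mul_le_of_le_one_left hx hr1) hxy

theorem goldenRatio_case1_revenue_general {r t θ α β : R} (hr0 : 0 ≤ r) (hrt : r ≤ t)
    (hrt1 : r * (t + 1) ≤ 1) (hβ0 : 0 ≤ β) (hβθ : β ≤ θ) :
    (if α > t * θ then α + β else θ) ≥ r * max θ (α + β) := by
  have hθ : 0 ≤ θ := hβ0.trans hβθ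
  have ht0 : 0 ≤ t := hr0.trans hrt
  have hr1 : r ≤ 1 := (le_mul_of_one_le_right hr0 (le_add_of_nonneg_left ht0)).trans hrt1
  split_ifs with h
  · have hsum : t * θ ≤ α + β := h.le.trans (le_add_of_nonneg_right hβ0)
    rw [max_comm]
    exact mul_max_le_of_mul_le hr0 hr1 ((mul_nonneg ht0 hθ).trans hsum)
      ((mul_le_mul_of_nonneg_right hrt hθ).trans hsum)
  · refine mul_max_le_of_mul_le hr0 hr1 hθ ?_
    calc r * (α + β) ≤ r * (t * θ + θ) := by gcongr; exact not_lt.mp h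
      _ = r * (t + 1) * θ := by rw [mul_assoc, add_one_mul]
      _ ≤ θ := mul_le_of_le_one_left hθ hrt1

end ThresholdRule

section GoldenRatio

open Real

theorem inv_goldenRatio_eq_sqrt_five_sub_one_div_two : goldenRatio⁻¹ = (√5 - 1) / 2 := by
  rw [inv_goldenRatio, goldenConj]
  ring

theorem inv_goldenRatio_add_one : goldenRatio⁻¹ + 1 = goldenRatio := by
  rw [inv_goldenRatio, ← one_sub_goldenRatio]
  ring

theorem inv_goldenRatio_mul_inv_goldenRatio_add_one :
    goldenRatio⁻¹ * (goldenRatio⁻¹ + 1) = 1 := by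
  rw [inv_goldenRatio_add_one, inv_mul_cancel₀ goldenRatio_ne_zero]

end GoldenRatio

/-- revenue guarantee of Case 1 of the golden ratio mechanism. With
`r = (√5 - 1)/2`, `θ = v₁(2)`, `β = v₁(1)`, `α = v₂(1)`, `0 ≤ β ≤ θ`, `0 ≤ α`, we have
`(if α > r·θ then α + β else θ) ≥ r · max(θ, α + β)`. -/
theorem goldenRatio_case1_revenue (θ α β : ℝ) (hβ0 : 0 ≤ β) (hβθ : β ≤ θ) (hα : 0 ≤ α) :
    (if α > ((Real.sqrt 5 - 1) / 2) * θ then α + β else θ) ≥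
      ((Real.sqrt 5 - 1) / 2) * max θ (α + β) := by
  rw [← inv_goldenRatio_eq_sqrt_five_sub_one_div_two]
  exact goldenRatio_case1_revenue_general (inv_nonneg.mpr Real.goldenRatio_pos.le) le_rfl
    inv_goldenRatio_mul_inv_goldenRatio_add_one.le hβ0 hβθ
end

section
/- For every ε > 0 and every deterministic mechanism (f, p) for 2 bidders and 2 identical units, defined on the domain of profiles with v_1(2) > v_2(2) (bidder 1 is the public strongest bidder), that is individually rational and truthful for value bidders, there exists a profile v in the domain for which the revenue Σ_i p_i(v) is strictly less than ((√5 − 1)/2 + ε) times the optimal revenue. -/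
/-- Optimal revenue with two bidders and `m` identical units: the maximum over
allocations `(s₁, s₂)` with `s₁ + s₂ ≤ m` of `v₁(s₁) + v₂(s₂)`. -/
noncomputable def optRevTwo (m : ℕ) (v₁ v₂ : ℕ → ℝ) : ℝ :=
  sSup {x : ℝ | ∃ s₁ s₂ : ℕ, s₁ + s₂ ≤ m ∧ x = v₁ s₁ + v₂ s₂}

/-!
Fix the weaker bidder's valuation `v₂` and a number `b` just large enough that serving her alone
misses the revenue target when the strong bidder values only the whole supply, at `b`. On that
profile the strong bidder must therefore win everything, at a price of at most `b`. A strong bidder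
who values any nonempty partial bundle at `b` and the whole supply at slightly more can afford this
outcome and strictly prefers it, so by truthfulness he wins everything too; the optimum instead
gives one unit to the weak bidder. When the weak bidder has value `1` for any nonempty bundle, the
two ratios, `1 / b` and about `b / (b + 1)`, coincide for `b` the golden ratio.
-/

/-- An allocation rule `x` and payment rule `t` for a single bidder (the other reports being fixed)
are truthful for a value bidder on the set `D` of possible valuations: no misreport in `D` whose
price is within the bidder's true value for the outcome yields an outcome of higher value. -/
def ValueTruthfulOn (D : Set (ℕ → ℝ)) (x : (ℕ → ℝ) → ℕ) (t : (ℕ → ℝ) → ℝ) : Prop :=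
  ∀ v ∈ D, ∀ v' ∈ D, t v' ≤ v (x v') → v (x v') ≤ v (x v)

/-- The possible valuations of the public strongest bidder for `m` units when the other bidder
values the whole supply at `c`. -/
def strongestValuations (m : ℕ) (c : ℝ) : Set (ℕ → ℝ) :=
  {v | MUValuation v ∧ c < v m}

/-- The valuation worth `a` for a nonempty bundle of fewer than `m` units and `b` for `m` or more
units. -/
def stepValuation (m : ℕ) (a b : ℝ) (s : ℕ) : ℝ :=
  if s = 0 then 0 else if s < m then a else b

section stepValuation

variable {m : ℕ} {a b : ℝ}

theorem stepValuation_of_lt {s : ℕ} (hs : s ≠ 0) (hsm : s < m) : stepValuation m a b s = a := by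
  simp [stepValuation, hs, hsm]

theorem stepValuation_self (hm : m ≠ 0) : stepValuation m a b m = b := by
  simp [stepValuation, hm]

theorem muValuation_stepValuation (ha : 0 ≤ a) (hab : a ≤ b) :
    MUValuation (stepValuation m a b) := by
  refine ⟨if_pos rfl, fun s t hst => ?_, fun s => ?_⟩ <;> unfold stepValuation <;>
    split_ifs <;> first | omega | linarith

theorem stepValuation_mem_strongestValuations {c : ℝ} (hm : m ≠ 0) (ha : 0 ≤ a) (hab : a ≤ b)
    (hcb : c < b) : stepValuation m a b ∈ strongestValuations m c :=
  ⟨muValuation_stepValuation ha hab, by rwa [stepValuation_self hm]⟩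

end stepValuation

theorem le_optRevTwo {m s₁ s₂ : ℕ} {v₁ v₂ : ℕ → ℝ} (h₁ : Monotone v₁) (h₂ : Monotone v₂)
    (hs : s₁ + s₂ ≤ m) : v₁ s₁ + v₂ s₂ ≤ optRevTwo m v₁ v₂ := by
  refine le_csSup ⟨v₁ m + v₂ m, ?_⟩ ⟨s₁, s₂, hs, rfl⟩
  rintro x ⟨t₁, t₂, ht, rfl⟩
  exact add_le_add (h₁ (by omega)) (h₂ (by omega))

theorem fst_eq_of_lt_revenue {m s₁ s₂ : ℕ} {v₁ v₂ : ℕ → ℝ} {q₁ q₂ : ℝ} (h₁ : Monotone v₁)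
    (h₂ : Monotone v₂) (hs : s₁ + s₂ ≤ m) (hq₁ : q₁ ≤ v₁ s₁) (hq₂ : q₂ ≤ v₂ s₂)
    (hrev : v₁ (m - 1) + v₂ m < q₁ + q₂) : s₁ = m := by
  by_contra hne
  have hv₁ : v₁ s₁ ≤ v₁ (m - 1) := h₁ (by omega)
  have hv₂ : v₂ s₂ ≤ v₂ m := h₂ (by omega)
  linarith

theorem revenue_le_of_fst_eq {m s₁ s₂ : ℕ} {v₁ v₂ : ℕ → ℝ} {q₁ q₂ : ℝ} (h₂ : v₂ 0 = 0)
    (hs : s₁ + s₂ ≤ m) (hq₁ : q₁ ≤ v₁ s₁) (hq₂ : q₂ ≤ v₂ s₂) (hs₁ : s₁ = m) :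
    q₁ + q₂ ≤ v₁ m := by
  obtain rfl : s₂ = 0 := by omega
  subst hs₁
  linarith

theorem ValueTruthfulOn.alloc_eq_of_pay_le {D : Set (ℕ → ℝ)} {x : (ℕ → ℝ) → ℕ}
    {t : (ℕ → ℝ) → ℝ} (h : ValueTruthfulOn D x t) {m : ℕ} {v w : ℕ → ℝ} (hv : v ∈ D)
    (hw : w ∈ D) (hmono : Monotone w) (hstrict : w (m - 1) < w m) (hxv : x v = m)
    (hpay : t v ≤ w m) (hxw : x w ≤ m) : x w = m := by
  by_contra hne
  have hpref : w m ≤ w (x w) := hxv ▸ h w hw v hv (hxv.symm ▸ hpay)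
  have hfewer : w (x w) ≤ w (m - 1) := hmono (by omega)
  linarith

theorem exists_strongestValuation_revenue_lt {m : ℕ} (hm : 2 ≤ m) {v₂ : ℕ → ℝ}
    (hv₂ : MUValuation v₂) {x : (ℕ → ℝ) → ℕ × ℕ} {t : (ℕ → ℝ) → ℝ × ℝ}
    (hfeas : ∀ v ∈ strongestValuations m (v₂ m), (x v).1 + (x v).2 ≤ m)
    (hIR : ∀ v ∈ strongestValuations m (v₂ m), (t v).1 ≤ v (x v).1 ∧ (t v).2 ≤ v₂ (x v).2)
    (htruth : ValueTruthfulOn (strongestValuations m (v₂ m)) (fun v => (x v).1)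
      (fun v => (t v).1))
    {b δ r : ℝ} (hb : v₂ m < b) (hδ : 0 < δ) (hrb : v₂ m < r * b)
    (hrδ : b + δ < r * (b + v₂ 1)) :
    ∃ v ∈ strongestValuations m (v₂ m), (t v).1 + (t v).2 < r * optRevTwo m v v₂ := by
  by_contra! hrev
  have hb₀ : 0 < b := (hv₂.2.2 m).trans_lt hb
  have hr : 0 ≤ r := (pos_of_mul_pos_left ((hv₂.2.2 m).trans_lt hrb) hb₀.le).le
  have hvm : stepValuation m 0 b m = b := stepValuation_self (by omega)
  have hwm : stepValuation m b (b + δ) m = b + δ := stepValuation_self (by omega)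
  have hv_pred : stepValuation m 0 b (m - 1) = 0 := stepValuation_of_lt (by omega) (by omega)
  have hw_pred : stepValuation m b (b + δ) (m - 1) = b :=
    stepValuation_of_lt (by omega) (by omega)
  have hv : stepValuation m 0 b ∈ strongestValuations m (v₂ m) :=
    stepValuation_mem_strongestValuations (by omega) le_rfl hb₀.le hb
  have hw : stepValuation m b (b + δ) ∈ strongestValuations m (v₂ m) :=
    stepValuation_mem_strongestValuations (by omega) hb₀.le (by linarith) (by linarith)
  set v := stepValuation m 0 b
  set w := stepValuation m b (b + δ)
  have hv_wins : (x v).1 = m := by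
    have hopt : v m + v₂ 0 ≤ optRevTwo m v v₂ := le_optRevTwo hv.1.2.1 hv₂.2.1 le_rfl
    rw [hvm, hv₂.1, add_zero] at hopt
    refine fst_eq_of_lt_revenue hv.1.2.1 hv₂.2.1 (hfeas v hv) (hIR v hv).1 (hIR v hv).2 ?_
    calc v (m - 1) + v₂ m = v₂ m := by rw [hv_pred, zero_add]
      _ < r * b := hrb
      _ ≤ r * optRevTwo m v v₂ := by gcongr
      _ ≤ (t v).1 + (t v).2 := hrev v hv
  have hw_wins : (x w).1 = m := by
    have hpay : (t v).1 ≤ b := hvm ▸ hv_wins ▸ (hIR v hv).1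
    exact htruth.alloc_eq_of_pay_le hv hw hw.1.2.1 (by linarith) hv_wins (by linarith)
      (le_of_add_le_left (hfeas w hw))
  have hopt : w (m - 1) + v₂ 1 ≤ optRevTwo m w v₂ :=
    le_optRevTwo hw.1.2.1 hv₂.2.1 (by omega)
  rw [hw_pred] at hopt
  refine (hrev w hw).not_gt ?_
  calc (t w).1 + (t w).2 ≤ w m :=
        revenue_le_of_fst_eq hv₂.1 (hfeas w hw) (hIR w hw).1 (hIR w hw).2 hw_wins
    _ = b + δ := hwm
    _ < r * (b + v₂ 1) := hrδ
    _ ≤ r * optRevTwo m w v₂ := by gcongr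

open Real goldenRatio in
theorem no_truthful_2x2_mechanism_beats_golden_ratio_general
    (m : ℕ) (hm : 2 ≤ m) (ε : ℝ) (hε : 0 < ε)
    (f : (ℕ → ℝ) → (ℕ → ℝ) → ℕ × ℕ) (p : (ℕ → ℝ) → (ℕ → ℝ) → ℝ × ℝ)
    (hfeas : ∀ v₁ v₂, MUValuation v₁ → MUValuation v₂ → v₂ m < v₁ m →
      (f v₁ v₂).1 + (f v₁ v₂).2 ≤ m)
    (hIR : ∀ v₁ v₂, MUValuation v₁ → MUValuation v₂ → v₂ m < v₁ m →
      (p v₁ v₂).1 ≤ v₁ (f v₁ v₂).1 ∧ (p v₁ v₂).2 ≤ v₂ (f v₁ v₂).2)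
    (htruth₁ : ∀ v₁ v₂ v₁', MUValuation v₁ → MUValuation v₂ → MUValuation v₁' →
      v₂ m < v₁ m → v₂ m < v₁' m →
      ((p v₁' v₂).1 ≤ v₁ (f v₁' v₂).1 → v₁ (f v₁' v₂).1 ≤ v₁ (f v₁ v₂).1)) :
    ∃ v₁ v₂ : ℕ → ℝ, MUValuation v₁ ∧ MUValuation v₂ ∧ v₂ m < v₁ m ∧
      (p v₁ v₂).1 + (p v₁ v₂).2 < ((√5 - 1) / 2 + ε) * optRevTwo m v₁ v₂ := by
  let v₂ := stepValuation m 1 1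
  have hv₂ : MUValuation v₂ := muValuation_stepValuation zero_le_one le_rfl
  have hv₂m : v₂ m = 1 := stepValuation_self (by omega)
  have hv₂1 : v₂ 1 = 1 := stepValuation_of_lt one_ne_zero (by omega)
  have hφ : (√5 - 1) / 2 = φ - 1 := by rw [goldenRatio]; ring
  have hr_mul_φ : (φ - 1 + ε) * φ = 1 + ε * φ := by linear_combination goldenRatio_sq
  have hr_mul_φ_add_one : (φ - 1 + ε) * (φ + 1) = φ + ε + ε * φ := by
    linear_combination goldenRatio_sq
  have hεφ : 0 < ε * φ := mul_pos hε goldenRatio_pos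
  obtain ⟨v₁, ⟨hv₁, hlt⟩, hrev⟩ := exists_strongestValuation_revenue_lt hm hv₂
    (fun v hv => hfeas v v₂ hv.1 hv₂ hv.2) (fun v hv => hIR v v₂ hv.1 hv₂ hv.2)
    (fun v hv v' hv' => htruth₁ v v₂ v' hv.1 hv₂ hv'.1 hv.2 hv'.2)
    (b := φ) (δ := ε) (r := φ - 1 + ε) (by rw [hv₂m]; exact one_lt_goldenRatio) hε
    (by rw [hv₂m, hr_mul_φ]; linarith) (by rw [hv₂1, hr_mul_φ_add_one]; linarith)
  exact ⟨v₁, v₂, hv₁, hv₂, hlt, by rwa [hφ]⟩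

/-- for every `ε > 0`, every deterministic, individually rational
mechanism for 2 bidders and 2 identical units on the domain `v₁(2) > v₂(2)` (bidder 1
is the public strongest bidder) that is truthful for value bidders has a profile in the
domain on which its revenue is less than `((√5 - 1)/2 + ε)` times the optimal revenue. -/
theorem no_truthful_2x2_mechanism_beats_golden_ratio
    (ε : ℝ) (hε : 0 < ε)
    (f : (ℕ → ℝ) → (ℕ → ℝ) → ℕ × ℕ) (p : (ℕ → ℝ) → (ℕ → ℝ) → ℝ × ℝ)
    (hfeas : ∀ v₁ v₂, MUValuation v₁ → MUValuation v₂ → v₂ 2 < v₁ 2 →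
      (f v₁ v₂).1 + (f v₁ v₂).2 ≤ 2)
    (hIR : ∀ v₁ v₂, MUValuation v₁ → MUValuation v₂ → v₂ 2 < v₁ 2 →
      (p v₁ v₂).1 ≤ v₁ (f v₁ v₂).1 ∧ (p v₁ v₂).2 ≤ v₂ (f v₁ v₂).2)
    (htruth₁ : ∀ v₁ v₂ v₁', MUValuation v₁ → MUValuation v₂ → MUValuation v₁' →
      v₂ 2 < v₁ 2 → v₂ 2 < v₁' 2 →
      ((p v₁' v₂).1 ≤ v₁ (f v₁' v₂).1 → v₁ (f v₁' v₂).1 ≤ v₁ (f v₁ v₂).1))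
    (htruth₂ : ∀ v₁ v₂ v₂', MUValuation v₁ → MUValuation v₂ → MUValuation v₂' →
      v₂ 2 < v₁ 2 → v₂' 2 < v₁ 2 →
      ((p v₁ v₂').2 ≤ v₂ (f v₁ v₂').2 → v₂ (f v₁ v₂').2 ≤ v₂ (f v₁ v₂).2)) :
    ∃ v₁ v₂ : ℕ → ℝ, MUValuation v₁ ∧ MUValuation v₂ ∧ v₂ 2 < v₁ 2 ∧
      (p v₁ v₂).1 + (p v₁ v₂).2 <
        ((Real.sqrt 5 - 1) / 2 + ε) * optRevTwo 2 v₁ v₂ :=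
  no_truthful_2x2_mechanism_beats_golden_ratio_general 2 le_rfl ε hε f p hfeas hIR htruth₁
end

section
/- Let θ, α, β be real numbers with θ > 0, 0 ≤ α ≤ θ and 0 ≤ β ≤ θ. Then (α/θ)·(α + β) + (1 − α/θ)·θ ≥ (3/4)·max(θ, α + β). -/
/-!
Write `S = α + β` and `q = α / θ`. For `0 ≤ q ≤ 1` each of the two revenues is at least a
multiple of the other: `q * θ = α ≤ S` since `0 ≤ β`, and
`(1 - q) * S ≤ (1 - q) * (1 + q) * θ ≤ θ` since `β ≤ θ`. Whichever revenue is the larger one,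
replacing the smaller by this bound in `q * S + (1 - q) * θ` leaves
`q ^ 2 + (1 - q) = q + (1 - q) ^ 2 = 1 - q * (1 - q) ≥ 3 / 4` times the larger one.
For `q` outside `[0, 1]` the affine combination extrapolates beyond the larger revenue.
-/

section AffineCombination

variable {R : Type*} [CommRing R] [LinearOrder R] [IsStrictOrderedRing R] {a b x y : R}

lemma max_le_affine_of_nonpos (hab : a + b = 1) (hb : b ≤ 0) (hyx : y ≤ x) :
    max x y ≤ a * x + b * y := by
  rw [max_eq_left hyx]
  calc
    x ≤ x + b * (y - x) :=
      le_add_of_nonneg_right (mul_nonneg_of_nonpos_of_nonpos hb (sub_nonpos.2 hyx))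
    _ = a * x + b * y := by linear_combination -x * hab

lemma one_sub_mul_mul_le_affine (hab : a + b = 1) (hb : 0 ≤ b) (hbx : b * x ≤ y) :
    (1 - a * b) * x ≤ a * x + b * y :=
  calc
    (1 - a * b) * x = a * x + b * (b * x) := by linear_combination (-1 - b) * x * hab
    _ ≤ a * x + b * y := by gcongr

lemma one_sub_mul_mul_max_le_affine (hab : a + b = 1) (ha : 0 ≤ a) (hb : 0 ≤ b)
    (hay : a * y ≤ x) (hbx : b * x ≤ y) :
    (1 - a * b) * max x y ≤ a * x + b * y := by
  rcases max_choice x y with h | h <;> rw [h]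
  · exact one_sub_mul_mul_le_affine hab hb hbx
  · rw [mul_comm a b, add_comm (a * x)]
    exact one_sub_mul_mul_le_affine (add_comm a b ▸ hab) ha hay

end AffineCombination

section OrderedField

variable {K : Type*} [Field K] [LinearOrder K] [IsStrictOrderedRing K]

lemma three_quarters_le_one_sub_mul {a b : K} (hab : a + b = 1) : 3 / 4 ≤ 1 - a * b := by
  have four_mul_le : 4 * a * b ≤ 1 := by simpa [hab] using four_mul_le_sq_add a b
  linarith

lemma one_sub_div_mul_add_le {θ α β : K} (hθ : 0 < θ) (hαθ : α ≤ θ) (hβθ : β ≤ θ) :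
    (1 - α / θ) * (α + β) ≤ θ := by
  have one_sub_nonneg : 0 ≤ 1 - α / θ := sub_nonneg.2 ((div_le_one hθ).2 hαθ)
  calc
    (1 - α / θ) * (α + β) ≤ (1 - α / θ) * (α + θ) := by gcongr
    _ = θ - (α / θ) ^ 2 * θ := by field
    _ ≤ θ := sub_le_self _ (by positivity)

lemma one_sub_mul_mul_max_le_revenue {θ α β : K} (hθ : 0 < θ) (hα0 : 0 ≤ α) (hαθ : α ≤ θ)
    (hβ0 : 0 ≤ β) (hβθ : β ≤ θ) :
    (1 - α / θ * (1 - α / θ)) * max θ (α + β) ≤ α / θ * (α + β) + (1 - α / θ) * θ := by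
  have mul_le_sum : α / θ * θ ≤ α + β := by
    rw [div_mul_cancel₀ α hθ.ne']
    exact le_add_of_nonneg_right hβ0
  rw [max_comm]
  exact one_sub_mul_mul_max_le_affine (add_sub_cancel _ _) (div_nonneg hα0 hθ.le)
    (sub_nonneg.2 ((div_le_one hθ).2 hαθ)) mul_le_sum (one_sub_div_mul_add_le hθ hαθ hβθ)

lemma max_le_revenue_of_nonpos {θ α β : K} (hθ : 0 < θ) (hα : α ≤ 0) (hβθ : β ≤ θ) :
    max θ (α + β) ≤ α / θ * (α + β) + (1 - α / θ) * θ := by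
  rw [add_comm (α / θ * _)]
  exact max_le_affine_of_nonpos (sub_add_cancel _ _) (div_nonpos_of_nonpos_of_nonneg hα hθ.le)
    ((add_le_of_nonpos_left hα).trans hβθ)

lemma max_le_revenue_of_le {θ α β : K} (hθ : 0 < θ) (hθα : θ ≤ α) (hβ0 : 0 ≤ β) :
    max θ (α + β) ≤ α / θ * (α + β) + (1 - α / θ) * θ := by
  rw [max_comm]
  exact max_le_affine_of_nonpos (add_sub_cancel _ _) (sub_nonpos.2 ((one_le_div hθ).2 hθα))
    (le_add_of_le_of_nonneg hθα hβ0)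

theorem randomized_2x2_revenue_general {θ α β : K} (hθ : 0 < θ) (hβ0 : 0 ≤ β) (hβθ : β ≤ θ) :
    3 / 4 * max θ (α + β) ≤ α / θ * (α + β) + (1 - α / θ) * θ := by
  have optimum_nonneg : 0 ≤ max θ (α + β) := le_max_of_le_left hθ.le
  have le_optimum : 3 / 4 * max θ (α + β) ≤ max θ (α + β) :=
    mul_le_of_le_one_left optimum_nonneg (by norm_num)
  rcases le_total α 0 with hα0 | hα0
  · exact le_optimum.trans (max_le_revenue_of_nonpos hθ hα0 hβθ)
  rcases le_total θ α with hθα | hαθ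
  · exact le_optimum.trans (max_le_revenue_of_le hθ hθα hβ0)
  · calc
      3 / 4 * max θ (α + β) ≤ (1 - α / θ * (1 - α / θ)) * max θ (α + β) := by
        gcongr
        exact three_quarters_le_one_sub_mul (add_sub_cancel _ _)
      _ ≤ α / θ * (α + β) + (1 - α / θ) * θ :=
        one_sub_mul_mul_max_le_revenue hθ hα0 hαθ hβ0 hβθ

end OrderedField

/-- the expected-revenue guarantee of the randomized 2×2 mechanism.
With `θ = v₁(2) > 0`, `β = v₁(1) ≤ θ` and `α = v₂(1) ≤ θ`, assigning one unit to each
bidder with probability `α/θ` (collecting `α + β`) and both units to bidder 1 otherwise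
(collecting `θ`) yields expected revenue at least `(3/4)·max(θ, α + β)`. -/
theorem randomized_2x2_revenue (θ α β : ℝ) (hθ : 0 < θ)
    (hα0 : 0 ≤ α) (hαθ : α ≤ θ) (hβ0 : 0 ≤ β) (hβθ : β ≤ θ) :
    (α / θ) * (α + β) + (1 - α / θ) * θ ≥ (3 / 4) * max θ (α + β) :=
  randomized_2x2_revenue_general hθ hβ0 hβθ
end

section
/- For every ε > 0 and every deterministic mechanism (f, p) for 2 bidders and 2 heterogeneous items A and B, defined on the domain of profiles with v_1({A,B}) > v_2({A,B}) (bidder 1 is the public strongest bidder), that is individually rational and truthful for value bidders, there exists a profile v in the domain for which the revenue Σ_i p_i(v) is strictly less than (1/2 + ε) times the optimal revenue. -/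
/-- A valuation on subsets of the two heterogeneous items (`Fin 2`):
`v ∅ = 0`, monotone (free disposal), nonnegative. -/
def HetValuation (v : Finset (Fin 2) → ℝ) : Prop :=
  v ∅ = 0 ∧ (∀ S T, S ⊆ T → v S ≤ v T) ∧ ∀ S, 0 ≤ v S

/-- Optimal revenue with two bidders and two heterogeneous items: the maximum over
allocations of disjoint bundles `(S₁, S₂)` of `v₁(S₁) + v₂(S₂)`. -/
noncomputable def optRevHet (v₁ v₂ : Finset (Fin 2) → ℝ) : ℝ :=
  sSup {x : ℝ | ∃ S₁ S₂ : Finset (Fin 2), Disjoint S₁ S₂ ∧ x = v₁ S₁ + v₂ S₂}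

/-!
Call a bidder *flexible* if item `0` is worth `t` to them, slightly more than `1`, and item `1` is
worth `1`, and *focused* if only bundles with item `0` have value to them. Facing one bidder of each
kind, the optimum is at least `2`, but a mechanism that withholds item `0` from the focused bidder
can collect only from the flexible one, about `1`. So a mechanism beating `1/2` gives item `0` to
the focused bidder. A flexible bidder can then secure item `0` by posing as a focused one, so when
both bidders are flexible, truthfulness forces the mechanism to give item `0` to both.
-/

/-- The valuation worth `a` on `{0}`, `b` on `{1}` and `t` on both items; every valuation on two
items arises in this way. -/
def pairVal (a b t : ℝ) (S : Finset (Fin 2)) : ℝ :=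
  if 0 ∈ S then (if 1 ∈ S then t else a) else (if 1 ∈ S then b else 0)

section pairVal

variable {a b t : ℝ} {S : Finset (Fin 2)}

@[simp]
theorem pairVal_univ : pairVal a b t Finset.univ = t := by
  simp [pairVal]

@[simp]
theorem pairVal_singleton_zero : pairVal a b t {0} = a := by
  simp [pairVal]

@[simp]
theorem pairVal_singleton_one : pairVal a b t {1} = b := by
  simp [pairVal]

theorem pairVal_of_zero_mem (h : 0 ∈ S) : pairVal t b t S = t := by
  simp [pairVal, h]

theorem pairVal_le_of_zero_notMem (hb : 0 ≤ b) (h : 0 ∉ S) : pairVal a b t S ≤ b := by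
  rw [pairVal, if_neg h]
  split_ifs <;> linarith

theorem hetValuation_pairVal (ha : 0 ≤ a) (hb : 0 ≤ b) (hat : a ≤ t) (hbt : b ≤ t) :
    HetValuation (pairVal a b t) := by
  refine ⟨by simp [pairVal], fun S T hST => ?_, fun S => ?_⟩
  · have h0 := @hST 0
    have h1 := @hST 1
    grind [pairVal]
  · grind [pairVal]

end pairVal

/-- The valuation of a flexible bidder: `t` with item `0`, with or without item `1`, and `1` with
item `1` alone. -/
abbrev flexibleVal (t : ℝ) : Finset (Fin 2) → ℝ :=
  pairVal t 1 t

/-- The valuation of a focused bidder, for whom item `1` has no value of its own. The value `s` of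
both items is free, so that a focused report can keep bidder 1 the stronger one. -/
abbrev focusedVal (s : ℝ) : Finset (Fin 2) → ℝ :=
  pairVal 1 0 s

theorem hetValuation_flexibleVal {t : ℝ} (ht : 1 ≤ t) : HetValuation (flexibleVal t) :=
  hetValuation_pairVal (zero_le_one.trans ht) zero_le_one le_rfl ht

theorem hetValuation_focusedVal {s : ℝ} (hs : 1 ≤ s) : HetValuation (focusedVal s) :=
  hetValuation_pairVal zero_le_one le_rfl hs (zero_le_one.trans hs)

theorem HetValuation.le_univ {v : Finset (Fin 2) → ℝ} (hv : HetValuation v)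
    (S : Finset (Fin 2)) : v S ≤ v Finset.univ :=
  hv.2.1 S _ S.subset_univ

theorem add_le_optRevHet {v₁ v₂ : Finset (Fin 2) → ℝ} (h₁ : HetValuation v₁)
    (h₂ : HetValuation v₂) {S₁ S₂ : Finset (Fin 2)} (h : Disjoint S₁ S₂) :
    v₁ S₁ + v₂ S₂ ≤ optRevHet v₁ v₂ := by
  refine le_csSup ⟨v₁ Finset.univ + v₂ Finset.univ, ?_⟩ ⟨S₁, S₂, h, rfl⟩
  rintro x ⟨T₁, T₂, -, rfl⟩
  exact add_le_add (h₁.le_univ T₁) (h₂.le_univ T₂)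

theorem optRevHet_comm (v₁ v₂ : Finset (Fin 2) → ℝ) : optRevHet v₁ v₂ = optRevHet v₂ v₁ := by
  unfold optRevHet
  congr 1
  ext x
  constructor <;> rintro ⟨S₁, S₂, h, rfl⟩ <;> exact ⟨S₂, S₁, h.symm, add_comm _ _⟩

theorem two_le_optRevHet_focusedVal_flexibleVal {s t : ℝ} (hs : 1 ≤ s) (ht : 1 ≤ t) :
    2 ≤ optRevHet (focusedVal s) (flexibleVal t) :=
  calc
    (2 : ℝ) = focusedVal s {0} + flexibleVal t {1} := by norm_num
    _ ≤ optRevHet (focusedVal s) (flexibleVal t) :=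
      add_le_optRevHet (hetValuation_focusedVal hs) (hetValuation_flexibleVal ht) (by simp)

theorem zero_mem_of_univ_lt_revenue {a s x y : ℝ} {v : Finset (Fin 2) → ℝ}
    {S T : Finset (Fin 2)} (hv : HetValuation v) (hx : x ≤ pairVal a 0 s S) (hy : y ≤ v T)
    (hrev : v Finset.univ < x + y) : 0 ∈ S := by
  by_contra hS
  have hx₀ : x ≤ 0 := hx.trans (pairVal_le_of_zero_notMem le_rfl hS)
  linarith [hv.le_univ T]

/-- `S` is what the bidder gets by reporting truthfully, and `S'`, at price `x`, what they get by
reporting `w`. -/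
theorem zero_mem_of_zero_mem_misreport {b t x : ℝ} {w : Finset (Fin 2) → ℝ}
    {S S' : Finset (Fin 2)} (hb : 0 ≤ b) (hbt : b < t) (hw : HetValuation w)
    (hwt : w Finset.univ ≤ t) (hx : x ≤ w S')
    (htruth : x ≤ pairVal t b t S' → pairVal t b t S' ≤ pairVal t b t S) (hS' : 0 ∈ S') :
    0 ∈ S := by
  by_contra hS
  rw [pairVal_of_zero_mem hS'] at htruth
  have hxt : x ≤ t := hx.trans ((hw.le_univ S').trans hwt)
  exact hbt.not_ge ((htruth hxt).trans (pairVal_le_of_zero_notMem hb hS))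

/-- Under the focused misreport `y` is what the other bidder, with valuation `v`, pays for `T`; the
roles of `S`, `S'` and `x` are those of `zero_mem_of_zero_mem_misreport`. -/
theorem zero_mem_of_focusedVal_misreport {s t x y : ℝ} {v : Finset (Fin 2) → ℝ}
    {S S' T : Finset (Fin 2)} (ht : 1 < t) (hs : 1 ≤ s) (hst : s ≤ t) (hv : HetValuation v)
    (hIR : x ≤ focusedVal s S' ∧ y ≤ v T) (hrev : v Finset.univ < x + y)
    (htruth : x ≤ flexibleVal t S' → flexibleVal t S' ≤ flexibleVal t S) : 0 ∈ S :=
  zero_mem_of_zero_mem_misreport zero_le_one ht (hetValuation_focusedVal hs) (by simpa) hIR.1 htruth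
    (zero_mem_of_univ_lt_revenue hv hIR.1 hIR.2 hrev)

/-- for every `ε > 0`, every deterministic, individually rational
mechanism for 2 bidders and 2 heterogeneous items on the domain `v₁({A,B}) > v₂({A,B})`
(bidder 1 is the public strongest bidder) that is truthful for value bidders has a
profile in the domain on which its revenue is less than `(1/2 + ε)` times the optimal
revenue. -/
theorem no_truthful_two_heterogeneous_items_mechanism_beats_one_half
    (ε : ℝ) (hε : 0 < ε)
    (f : (Finset (Fin 2) → ℝ) → (Finset (Fin 2) → ℝ) → Finset (Fin 2) × Finset (Fin 2))
    (p : (Finset (Fin 2) → ℝ) → (Finset (Fin 2) → ℝ) → ℝ × ℝ)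
    (hfeas : ∀ v₁ v₂, HetValuation v₁ → HetValuation v₂ →
      v₂ Finset.univ < v₁ Finset.univ → Disjoint (f v₁ v₂).1 (f v₁ v₂).2)
    (hIR : ∀ v₁ v₂, HetValuation v₁ → HetValuation v₂ →
      v₂ Finset.univ < v₁ Finset.univ →
      (p v₁ v₂).1 ≤ v₁ (f v₁ v₂).1 ∧ (p v₁ v₂).2 ≤ v₂ (f v₁ v₂).2)
    (htruth₁ : ∀ v₁ v₂ v₁', HetValuation v₁ → HetValuation v₂ → HetValuation v₁' →
      v₂ Finset.univ < v₁ Finset.univ → v₂ Finset.univ < v₁' Finset.univ →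
      ((p v₁' v₂).1 ≤ v₁ (f v₁' v₂).1 → v₁ (f v₁' v₂).1 ≤ v₁ (f v₁ v₂).1))
    (htruth₂ : ∀ v₁ v₂ v₂', HetValuation v₁ → HetValuation v₂ → HetValuation v₂' →
      v₂ Finset.univ < v₁ Finset.univ → v₂' Finset.univ < v₁ Finset.univ →
      ((p v₁ v₂').2 ≤ v₂ (f v₁ v₂').2 → v₂ (f v₁ v₂').2 ≤ v₂ (f v₁ v₂).2)) :
    ∃ v₁ v₂ : Finset (Fin 2) → ℝ, HetValuation v₁ ∧ HetValuation v₂ ∧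
      v₂ Finset.univ < v₁ Finset.univ ∧
      (p v₁ v₂).1 + (p v₁ v₂).2 < (1 / 2 + ε) * optRevHet v₁ v₂ := by
  by_contra! hrev
  have lt_half_add_mul {r : ℝ} (hr : 2 ≤ r) : 1 + ε < (1 / 2 + ε) * r := by nlinarith
  have h₁ : 1 < 1 + ε := by linarith
  have h₂ : 1 < 1 + ε / 2 := by linarith
  have hv₁ := hetValuation_flexibleVal h₁.le
  have hv₂ := hetValuation_flexibleVal h₂.le
  have hw₁ := hetValuation_focusedVal h₁.le
  have hw₂ := hetValuation_focusedVal le_rfl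
  have hv_lt : flexibleVal (1 + ε / 2) .univ < flexibleVal (1 + ε) .univ := by simpa
  have hw₁_lt : flexibleVal (1 + ε / 2) .univ < focusedVal (1 + ε) .univ := by simpa
  have hw₂_lt : focusedVal 1 .univ < flexibleVal (1 + ε) .univ := by simpa
  have hmem₁ : 0 ∈ (f (flexibleVal (1 + ε)) (flexibleVal (1 + ε / 2))).1 := by
    have hopt := two_le_optRevHet_focusedVal_flexibleVal h₁.le h₂.le
    have hlt := (lt_half_add_mul hopt).trans_le (hrev _ _ hw₁ hv₂ hw₁_lt)
    exact zero_mem_of_focusedVal_misreport h₁ h₁.le le_rfl hv₂ (hIR _ _ hw₁ hv₂ hw₁_lt)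
      (by simp only [pairVal_univ]; linarith) (htruth₁ _ _ _ hv₁ hv₂ hw₁ hv_lt hw₁_lt)
  have hmem₂ : 0 ∈ (f (flexibleVal (1 + ε)) (flexibleVal (1 + ε / 2))).2 := by
    have hopt := optRevHet_comm _ _ ▸ two_le_optRevHet_focusedVal_flexibleVal le_rfl h₁.le
    have hlt := (lt_half_add_mul hopt).trans_le (hrev _ _ hv₁ hw₂ hw₂_lt)
    exact zero_mem_of_focusedVal_misreport h₂ le_rfl h₂.le hv₁ (hIR _ _ hv₁ hw₂ hw₂_lt).symm
      (by simp only [pairVal_univ]; linarith) (htruth₂ _ _ _ hv₁ hv₂ hw₂ hv_lt hw₂_lt)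
  exact Finset.disjoint_left.1 (hfeas _ _ hv₁ hv₂ hv_lt) hmem₁ hmem₂
end
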